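/- arXiv:1601.06501 — 2 statements merged into one kernel-verified Lean document; each statement's English description precedes it below -/
import Mathlib

section
/- Let b be a prime and s, α ∈ ℕ with α ≥ 2. If k, l ∈ ℕ₀^s satisfy κ(k ⊖ l) > 2αs, then K̂_{α,s}(k, l) = 0. -/
/-!
The multivariate coefficient is the product of the univariate ones (`KhatS_eq_prod`), and
`κ(k ⊖ l) > 2αs` forces `κ(k_j ⊖ l_j) > 2α` for some `j`, so it suffices to treat one pair `(k, l)`
of indices with more than `2α` differing digits (`Khat_eq_zero`).

Everything rests on self-similarity: for `a < b` and `x ∈ [0,1)`,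
`wal_k((a + x)/b) = ω_b^{(k mod b) a} wal_{⌊k/b⌋}(x)`. Cutting `[0,1)` into `b` equal pieces thus
expresses a Walsh coefficient through coefficients of rescaled functions with the lowest digit of
the index removed (`walCoeff_split`, `walCoeff₂_split`), and allows induction on the number of
digits.

* For `x^r` the rescaled functions are `((a + x)/b)^r`, whose top-degree term does not depend on `a`
  and is killed by the character sum if the lowest digit is nonzero. Hence the coefficient vanishes
  if `κ(k) > r` (`walCoeff_pow`), and a monomial `x^i y^j` has vanishing coefficient if
  `κ(k) + κ(l) > i + j`. As `κ(k) + κ(l) ≥ κ(k ⊖ l) > 2α`, this disposes of the products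
  `B_r(x) B_r(y)` and of the top term `(x - y)^{2α}` of `B_{2α}(|x - y|)`.
* For `|x - y|^m` the coefficient vanishes if more than `m + 1` digits differ
  (`walCoeff₂_abs_pow`). On the blocks `a ≠ c` the function is a polynomial of degree `m`, covered by
  the previous case, since removing the lowest digit leaves more than `m` differing digits. The
  blocks `a = c` all carry the same rescaled copy of `|x - y|^m`; their sum is zero if the lowest
  digits of `k` and `l` differ, and is covered by the induction hypothesis if they agree. With
  `m ≤ 2α - 1` this handles the remaining terms of `B_{2α}(|x - y|)`.
-/

open scoped BigOperators

/-- The `i`-th digit (starting from `i = 0`) of the `b`-adic expansion of `k`. -/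
def bdigit (b k i : ℕ) : ℕ := k / b ^ i % b

/-- The set of indices of nonzero `b`-adic digits of `k`. -/
def bsupp (b k : ℕ) : Finset ℕ := (Finset.range (k + 1)).filter fun i => bdigit b k i ≠ 0

/-- The Hamming metric `κ(k)`: the number of nonzero `b`-adic digits of `k`. -/
def hamming (b k : ℕ) : ℕ := (bsupp b k).card

/-- The Dick metric `μ_α(k)`: the sum of the `min(v, α)` largest exponents-plus-one
`a_1 > a_2 > ⋯` of the nonzero `b`-adic digits of `k`. -/
def dick (b α k : ℕ) : ℕ := ((((bsupp b k).sort (· ≤ ·)).reverse.take α).map (· + 1)).sum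

/-- Digitwise addition `k ⊕ l` modulo `b` of the `b`-adic digits. -/
def dadd (b k l : ℕ) : ℕ :=
  ∑ i ∈ Finset.range (k + l + 1), (bdigit b k i + bdigit b l i) % b * b ^ i

/-- Digitwise subtraction `k ⊖ l` modulo `b` of the `b`-adic digits. -/
def dsub (b k l : ℕ) : ℕ :=
  ∑ i ∈ Finset.range (k + l + 1), (bdigit b k i + (b - bdigit b l i)) % b * b ^ i

/-- Hamming metric of a vector: sum over coordinates. -/
def hammingVec (b : ℕ) {s : ℕ} (k : Fin s → ℕ) : ℕ := ∑ j, hamming b (k j)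

/-- Dick metric of a vector: sum over coordinates. -/
def dickVec (b α : ℕ) {s : ℕ} (k : Fin s → ℕ) : ℕ := ∑ j, dick b α (k j)

open MeasureTheory

/-- The `i`-th (for `i ≥ 1`) `b`-adic digit `ξ_i` of a real number `x ∈ [0,1)`, using the
expansion in which infinitely many digits differ from `b - 1`. -/
noncomputable def rdigit (b : ℕ) (x : ℝ) (i : ℕ) : ℤ := ⌊x * (b : ℝ) ^ i⌋ % b

/-- The `k`-th `b`-adic Walsh function, `wal_k(x) = ω_b^{κ_0 ξ_1 + κ_1 ξ_2 + ⋯}` where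
`ω_b = exp(2π√-1/b)`, `κ` are the `b`-adic digits of `k` and `ξ` those of `x`. -/
noncomputable def walsh (b k : ℕ) (x : ℝ) : ℂ :=
  Complex.exp (2 * (Real.pi : ℂ) * Complex.I / (b : ℂ) *
    ∑ a ∈ Finset.range (k + 1), (bdigit b k a : ℂ) * (rdigit b x (a + 1) : ℂ))

/-- The `k`-th `b`-adic Walsh function on `[0,1)^s`, `wal_k(x) = ∏_j wal_{k_j}(x_j)`. -/
noncomputable def walshVec (b : ℕ) {s : ℕ} (k : Fin s → ℕ) (x : Fin s → ℝ) : ℂ :=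
  ∏ j, walsh b (k j) (x j)

/-- The Bernoulli polynomial `B_r` evaluated at a real number. -/
noncomputable def bernoulliPoly (r : ℕ) (x : ℝ) : ℝ := Polynomial.aeval x (Polynomial.bernoulli r)

/-- The reproducing kernel `K_α` of the Sobolev space `H_α`:
`K_α(x,y) = ∑_{r=0}^{α} B_r(x)B_r(y)/(r!)² + (-1)^{α+1} B_{2α}(|x-y|)/(2α)!`. -/
noncomputable def Kker (α : ℕ) (x y : ℝ) : ℝ :=
  ∑ r ∈ Finset.range (α + 1), bernoulliPoly r x * bernoulliPoly r y / ((r.factorial : ℝ)) ^ 2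
    + (-1 : ℝ) ^ (α + 1) * bernoulliPoly (2 * α) |x - y| / ((2 * α).factorial : ℝ)

/-- The `(k,l)`-th Walsh coefficient of the kernel `K_α`. -/
noncomputable def Khat (b α : ℕ) (k l : ℕ) : ℂ :=
  ∫ x in Set.Ico (0 : ℝ) 1, ∫ y in Set.Ico (0 : ℝ) 1,
    (Kker α x y : ℂ) * (starRingEnd ℂ) (walsh b k x) * walsh b l y

/-- The `(k,l)`-th Walsh coefficient of the `s`-variate kernel
`K_{α,s}(x,y) = ∏_j K_α(x_j, y_j)`. -/
noncomputable def KhatS (b α s : ℕ) (k l : Fin s → ℕ) : ℂ :=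
  ∫ x in Set.univ.pi fun _ : Fin s => Set.Ico (0 : ℝ) 1,
    ∫ y in Set.univ.pi fun _ : Fin s => Set.Ico (0 : ℝ) 1,
      ((∏ j, Kker α (x j) (y j) : ℝ) : ℂ) * (starRingEnd ℂ) (walshVec b k x) * walshVec b l y

/-- The `k`-th Walsh coefficient `b̂_r(k)` of the normalized Bernoulli polynomial `B_r/r!`. -/
noncomputable def bhat (b r k : ℕ) : ℂ :=
  ∫ x in Set.Ico (0 : ℝ) 1,
    ((bernoulliPoly r x / (r.factorial : ℝ) : ℝ) : ℂ) * (starRingEnd ℂ) (walsh b k x)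

/-- The `(k,l)`-th Walsh coefficient `b̂_{r,per}(k,l)` of `(x,y) ↦ B̃_r(x-y)/r!`, where
`B̃_r` is the 1-periodic extension of the Bernoulli polynomial `B_r` from `[0,1)` to `ℝ`. -/
noncomputable def bhatPer (b r : ℕ) (k l : ℕ) : ℂ :=
  ∫ x in Set.Ico (0 : ℝ) 1, ∫ y in Set.Ico (0 : ℝ) 1,
    ((bernoulliPoly r (Int.fract (x - y)) / (r.factorial : ℝ) : ℝ) : ℂ) *
      (starRingEnd ℂ) (walsh b k x) * walsh b l y

/-! ### Counting digits -/

open Finset in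
/-- The number of nonzero digits of `k` among its `N` lowest `b`-adic digits. -/
def digitCount (b N k : ℕ) : ℕ := ∑ i ∈ range N, if bdigit b k i ≠ 0 then 1 else 0

open Finset in
/-- The number of positions among the `N` lowest at which the `b`-adic digits of `k` and `l`
differ. -/
def diffCount (b N k l : ℕ) : ℕ :=
  ∑ i ∈ range N, if bdigit b k i ≠ bdigit b l i then 1 else 0

lemma bdigit_zero (b k : ℕ) : bdigit b k 0 = k % b := by simp [bdigit]

lemma bdigit_succ (b k i : ℕ) : bdigit b k (i + 1) = bdigit b (k / b) i := by
  simp only [bdigit, pow_succ', Nat.div_div_eq_div_mul]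

lemma bdigit_eq_zero {b k i : ℕ} (hb : 2 ≤ b) (h : k ≤ i) : bdigit b k i = 0 := by
  have : k < b ^ i := lt_of_le_of_lt h (Nat.lt_pow_self (by omega))
  simp [bdigit, Nat.div_eq_of_lt this]

lemma digitCount_succ (b N k : ℕ) :
    digitCount b (N + 1) k = digitCount b N (k / b) + if k % b ≠ 0 then 1 else 0 := by
  simp only [digitCount, Finset.sum_range_succ', bdigit_zero, bdigit_succ]

lemma diffCount_succ (b N k l : ℕ) :
    diffCount b (N + 1) k l
      = diffCount b N (k / b) (l / b) + if k % b ≠ l % b then 1 else 0 := by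
  simp only [diffCount, Finset.sum_range_succ', bdigit_zero, bdigit_succ]

lemma diffCount_le (b N k l : ℕ) : diffCount b N k l ≤ digitCount b N k + digitCount b N l := by
  simp only [diffCount, digitCount, ← Finset.sum_add_distrib]
  refine Finset.sum_le_sum fun i _ => ?_
  split_ifs <;> grind

/-- A number with digits `c i < b` has at most as many nonzero digits as `c` has nonzero entries,
however many positions `M` are inspected. -/
lemma digitCount_sum_le {b : ℕ} (hb : 2 ≤ b) (N : ℕ) : ∀ (M : ℕ) (c : ℕ → ℕ), (∀ i, c i < b) →
    digitCount b M (∑ i ∈ Finset.range N, c i * b ^ i)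
      ≤ ∑ i ∈ Finset.range N, if c i ≠ 0 then 1 else 0 := by
  induction N with
  | zero => intro M c _; simp [digitCount, bdigit]
  | succ N ih =>
    intro M c hc
    cases M with
    | zero => simp [digitCount]
    | succ M =>
      have e : ∑ i ∈ Finset.range (N + 1), c i * b ^ i
          = c 0 + b * ∑ i ∈ Finset.range N, c (i + 1) * b ^ i := by
        rw [Finset.sum_range_succ', Finset.mul_sum, add_comm]
        simp only [pow_zero, mul_one]
        congr 1
        exact Finset.sum_congr rfl fun i _ => by ring
      rw [e, digitCount_succ, Finset.sum_range_succ', Nat.add_mul_mod_self_left,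
        Nat.mod_eq_of_lt (hc 0), Nat.add_mul_div_left _ _ (by omega),
        Nat.div_eq_of_lt (hc 0), zero_add]
      exact Nat.add_le_add_right (ih M (fun i => c (i + 1)) fun i => hc _) _

lemma hamming_dsub_le {b : ℕ} (hb : 2 ≤ b) (k l : ℕ) :
    hamming b (dsub b k l) ≤ diffCount b (k + l + 1) k l := by
  have h1 : hamming b (dsub b k l) = digitCount b (dsub b k l + 1) (dsub b k l) := by
    simp only [hamming, bsupp, digitCount, Finset.card_filter]
  rw [h1]
  have h2 := digitCount_sum_le hb (k + l + 1) (dsub b k l + 1)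
    (fun i => (bdigit b k i + (b - bdigit b l i)) % b) (fun i => Nat.mod_lt _ (by omega))
  refine le_trans h2 (Finset.sum_le_sum fun i _ => ?_)
  by_cases hi : bdigit b k i = bdigit b l i
  · have : bdigit b l i ≤ b := (Nat.mod_lt _ (by omega)).le
    simp [hi, Nat.add_sub_cancel' this]
  · simp only [ne_eq, hi, not_false_eq_true, if_true]
    split_ifs <;> simp

/-! ### Walsh functions under the map `x ↦ (a + x) / b` -/

/-- The root of unity `ω_b = exp(2π√-1/b)`. -/
noncomputable def rootU (b : ℕ) : ℂ := Complex.exp (2 * (Real.pi : ℂ) * Complex.I / (b : ℂ))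

lemma rdigit_shift_one {b a : ℕ} (ha : a < b) {x : ℝ} (hx : x ∈ Set.Ico (0 : ℝ) 1) :
    rdigit b ((a + x) / b) 1 = a := by
  have hb : (b : ℝ) ≠ 0 := by norm_cast; omega
  rw [rdigit, pow_one, div_mul_cancel₀ _ hb]
  have : ⌊(a : ℝ) + x⌋ = (a : ℤ) := by
    rw [Int.floor_eq_iff]
    constructor
    · push_cast; linarith [hx.1]
    · push_cast; linarith [hx.2]
  rw [this]
  exact Int.emod_eq_of_lt (by omega) (by omega)

lemma rdigit_shift_succ {b : ℕ} (hb : 2 ≤ b) (a i : ℕ) (x : ℝ) :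
    rdigit b ((a + x) / b) (i + 2) = rdigit b x (i + 1) := by
  have hb' : (b : ℝ) ≠ 0 := by norm_cast; omega
  have e : ((a : ℝ) + x) / b * (b : ℝ) ^ (i + 2)
      = x * (b : ℝ) ^ (i + 1) + ((a * b ^ i * b : ℤ) : ℝ) := by
    push_cast
    field_simp
    ring
  rw [rdigit, rdigit, e, Int.floor_add_intCast, Int.add_mul_emod_self_right]

lemma walsh_shift {b : ℕ} (hb : 2 ≤ b) (k : ℕ) {a : ℕ} (ha : a < b) {x : ℝ}
    (hx : x ∈ Set.Ico (0 : ℝ) 1) :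
    walsh b k ((a + x) / b) = (rootU b ^ (k % b)) ^ a * walsh b (k / b) x := by
  -- Digits at positions `≥ n` vanish, so the length of the digit sum is immaterial beyond `n`.
  have ext : ∀ n : ℕ, ∀ M, n ≤ M → ∀ y : ℝ,
      ∑ i ∈ Finset.range M, (bdigit b n i : ℂ) * (rdigit b y (i + 1) : ℂ)
        = ∑ i ∈ Finset.range n, (bdigit b n i : ℂ) * (rdigit b y (i + 1) : ℂ) := by
    intro n M hM y
    symm
    apply Finset.sum_subset (Finset.range_subset_range.2 hM)
    intro i _ hi
    rw [bdigit_eq_zero hb (by simpa using hi)]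
    simp
  unfold walsh
  rw [Finset.sum_range_succ', ext (k / b) (k / b + 1) (by omega),
    ← ext (k / b) k (Nat.div_le_self _ _), zero_add, rdigit_shift_one ha hx, bdigit_zero]
  simp only [bdigit_succ, rdigit_shift_succ hb, add_assoc, one_add_one_eq_two]
  rw [mul_add, Complex.exp_add, mul_comm, rootU, ← pow_mul, ← Complex.exp_nat_mul]
  congr 2
  push_cast
  ring

lemma norm_walsh (b k : ℕ) (x : ℝ) : ‖walsh b k x‖ = 1 := by
  have : walsh b k x = Complex.exp (((2 * Real.pi / b *
    ∑ a ∈ Finset.range (k + 1), (bdigit b k a : ℝ) * (rdigit b x (a + 1) : ℝ) : ℝ) : ℂ)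
      * Complex.I) := by
    unfold walsh
    congr 1
    push_cast
    ring
  rw [this, Complex.norm_exp_ofReal_mul_I]

lemma measurable_walsh (b k : ℕ) : Measurable (walsh b k) := by
  unfold walsh
  refine Complex.measurable_exp.comp (Measurable.const_mul ?_ _)
  refine Finset.measurable_sum _ fun a _ => Measurable.const_mul ?_ _
  have : Measurable fun x : ℝ => rdigit b x (a + 1) := by
    unfold rdigit
    exact (measurable_from_top (f := fun z : ℤ => z % b)).comp
      (Int.measurable_floor.comp (measurable_id.mul_const _))
  exact (measurable_from_top (f := fun z : ℤ => (z : ℂ))).comp this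

lemma sum_root_pow {b : ℕ} (hb : 2 ≤ b) {u v : ℕ} (hu : u < b) (hv : v < b) (h : u ≠ v) :
    ∑ a ∈ Finset.range b,
      (starRingEnd ℂ (rootU b ^ u)) ^ a * (rootU b ^ v) ^ a = 0 := by
  have hp : IsPrimitiveRoot (rootU b) b := Complex.isPrimitiveRoot_exp b (by omega)
  have hn : ‖rootU b‖ = 1 := hp.norm'_eq_one (by omega)
  have hc : rootU b ^ u * starRingEnd ℂ (rootU b ^ u) = 1 := by
    rw [Complex.mul_conj, Complex.normSq_eq_norm_sq]; simp [hn]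
  set z := starRingEnd ℂ (rootU b ^ u) * rootU b ^ v with hz
  have z1 : z ≠ 1 := by
    intro h1
    apply h
    apply hp.pow_inj hu hv
    calc rootU b ^ u = rootU b ^ u * z := by rw [h1, mul_one]
      _ = rootU b ^ v := by rw [hz, ← mul_assoc, hc, one_mul]
  have zb : z ^ b = 1 := by
    rw [hz, mul_pow, ← map_pow, ← pow_mul, ← pow_mul, mul_comm u, mul_comm v, pow_mul, pow_mul,
      hp.pow_eq_one]
    simp
  simp_rw [← mul_pow]
  rw [geom_sum_eq z1, zb]
  simp

lemma integral_split {b : ℕ} (hb : 2 ≤ b) (g : ℝ → ℂ) (hg : IntegrableOn g (Set.Ico 0 1)) :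
    ∫ x in Set.Ico (0 : ℝ) 1, g x
      = (1 / b : ℂ) * ∑ a ∈ Finset.range b, ∫ x in Set.Ico (0 : ℝ) 1, g ((a + x) / b) := by
  have hb' : (b : ℝ) ≠ 0 := by norm_cast; omega
  have hbp : (0 : ℝ) < b := by positivity
  have key : ∀ f : ℝ → ℂ, ∫ x in Set.Ico (0 : ℝ) 1, f x = ∫ x in (0 : ℝ)..1, f x := fun f => by
    rw [intervalIntegral.integral_of_le zero_le_one, integral_Ico_eq_integral_Ioc]
  simp_rw [key]
  have hi : ∀ a < b, IntervalIntegrable g volume ((fun n : ℕ => (n : ℝ) / b) a)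
      ((fun n : ℕ => (n : ℝ) / b) (a + 1)) := by
    intro a ha
    have h1 : (a : ℝ) / b ≤ ((a + 1 : ℕ) : ℝ) / b := by gcongr; simp
    rw [intervalIntegrable_iff_integrableOn_Ico_of_le h1]
    refine hg.mono_set (Set.Ico_subset_Ico (by positivity) ?_)
    rw [div_le_one hbp]
    exact_mod_cast ha
  have h := intervalIntegral.sum_integral_adjacent_intervals hi
  simp only [Nat.cast_zero, zero_div, div_self hb'] at h
  rw [← h, Finset.mul_sum]
  refine Finset.sum_congr rfl fun a _ => ?_
  have := intervalIntegral.integral_comp_add_div (a := 0) (b := 1) g hb' ((a : ℝ) / b)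
  have e : (fun x : ℝ => g ((a + x) / b)) = fun x => g ((a : ℝ) / b + x / b) := by
    funext x; rw [add_div]
  rw [e, this, zero_div, add_zero, ← add_div, Complex.real_smul]
  have hbc : (b : ℂ) ≠ 0 := by norm_cast; omega
  push_cast
  field_simp

/-! ### Walsh coefficients of functions of one and two variables -/

/-- The Walsh coefficient of a univariate function. -/
noncomputable def walCoeff (b k : ℕ) (f : ℝ → ℂ) : ℂ :=
  ∫ x in Set.Ico (0 : ℝ) 1, f x * (starRingEnd ℂ) (walsh b k x)

/-- The Walsh coefficient of a bivariate function, conjugated in the first variable only. -/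
noncomputable def walCoeff₂ (b k l : ℕ) (f : ℝ → ℝ → ℂ) : ℂ :=
  ∫ x in Set.Ico (0 : ℝ) 1, ∫ y in Set.Ico (0 : ℝ) 1,
    f x y * (starRingEnd ℂ) (walsh b k x) * walsh b l y

lemma integrableOn_mul_conj_walsh (b k : ℕ) {f : ℝ → ℂ} (hf : Continuous f) :
    IntegrableOn (fun x => f x * (starRingEnd ℂ) (walsh b k x)) (Set.Ico (0 : ℝ) 1) := by
  have h1 : IntegrableOn f (Set.Ico (0 : ℝ) 1) :=
    (hf.continuousOn.integrableOn_compact isCompact_Icc).mono_set Set.Ico_subset_Icc_self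
  refine h1.mul_bdd (c := 1) ?_ ?_
  · exact (Complex.continuous_conj.measurable.comp (measurable_walsh b k)).aestronglyMeasurable
  · exact Filter.Eventually.of_forall fun x => by simp [norm_walsh]

lemma integrable_walsh₂ (b k l : ℕ) {f : ℝ → ℝ → ℂ} (hf : Continuous (Function.uncurry f)) :
    Integrable (fun p : ℝ × ℝ => f p.1 p.2 * (starRingEnd ℂ) (walsh b k p.1) * walsh b l p.2)
      ((volume.restrict (Set.Ico (0 : ℝ) 1)).prod (volume.restrict (Set.Ico (0 : ℝ) 1))) := by
  have h1 : Integrable (Function.uncurry f)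
      ((volume.restrict (Set.Ico (0 : ℝ) 1)).prod (volume.restrict (Set.Ico (0 : ℝ) 1))) := by
    rw [Measure.prod_restrict]
    exact (hf.continuousOn.integrableOn_compact (isCompact_Icc.prod isCompact_Icc)).mono_set
      (Set.prod_mono Set.Ico_subset_Icc_self Set.Ico_subset_Icc_self)
  have h2 : Measurable fun p : ℝ × ℝ => (starRingEnd ℂ) (walsh b k p.1) * walsh b l p.2 :=
    (Complex.continuous_conj.measurable.comp ((measurable_walsh b k).comp measurable_fst)).mul
      ((measurable_walsh b l).comp measurable_snd)
  have h3 := h1.mul_bdd (c := 1) h2.aestronglyMeasurable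
    (Filter.Eventually.of_forall fun p => by simp [norm_walsh])
  simpa only [mul_assoc, Function.uncurry_def] using h3

lemma walCoeff_sum (b k : ℕ) {ι : Type*} (t : Finset ι) (c : ι → ℂ) (f : ι → ℝ → ℂ)
    (hf : ∀ i ∈ t, Continuous (f i)) :
    walCoeff b k (fun x => ∑ i ∈ t, c i * f i x) = ∑ i ∈ t, c i * walCoeff b k (f i) := by
  simp only [walCoeff, Finset.sum_mul, mul_assoc]
  rw [integral_finsetSum]
  · simp_rw [integral_const_mul]
  · intro i hi
    exact (integrableOn_mul_conj_walsh b k (hf i hi)).const_mul (c i)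

lemma walCoeff₂_sum (b k l : ℕ) {ι : Type*} (t : Finset ι) (c : ι → ℂ) (f : ι → ℝ → ℝ → ℂ)
    (hf : ∀ i ∈ t, Continuous (Function.uncurry (f i))) :
    walCoeff₂ b k l (fun x y => ∑ i ∈ t, c i * f i x y) = ∑ i ∈ t, c i * walCoeff₂ b k l (f i) := by
  have key : ∀ g : ℝ → ℝ → ℂ, Continuous (Function.uncurry g) → walCoeff₂ b k l g
      = ∫ p, g p.1 p.2 * (starRingEnd ℂ) (walsh b k p.1) * walsh b l p.2
        ∂((volume.restrict (Set.Ico (0 : ℝ) 1)).prod (volume.restrict (Set.Ico (0 : ℝ) 1))) := by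
    intro g hg
    rw [integral_prod _ (integrable_walsh₂ b k l hg)]
    rfl
  rw [key]
  · simp only [Finset.sum_mul, mul_assoc]
    rw [integral_finsetSum]
    · refine Finset.sum_congr rfl fun i hi => ?_
      rw [integral_const_mul, key _ (hf i hi)]
      simp only [mul_assoc]
    · intro i hi
      have := (integrable_walsh₂ b k l (hf i hi)).const_mul (c i)
      simpa only [mul_assoc] using this
  · exact continuous_finsetSum _ fun i hi => continuous_const.mul (hf i hi)

lemma walCoeff₂_congr (b k l : ℕ) {f g : ℝ → ℝ → ℂ}
    (h : ∀ x ∈ Set.Ico (0 : ℝ) 1, ∀ y ∈ Set.Ico (0 : ℝ) 1, f x y = g x y) :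
    walCoeff₂ b k l f = walCoeff₂ b k l g := by
  refine setIntegral_congr_fun measurableSet_Ico fun x hx => ?_
  refine setIntegral_congr_fun measurableSet_Ico fun y hy => ?_
  simp only [h x hx y hy]

lemma walCoeff₂_const_mul (b k l : ℕ) (c : ℂ) (f : ℝ → ℝ → ℂ) :
    walCoeff₂ b k l (fun x y => c * f x y) = c * walCoeff₂ b k l f := by
  simp only [walCoeff₂, mul_assoc, integral_const_mul]

lemma walCoeff₂_mul (b k l : ℕ) (f g : ℝ → ℂ) :
    walCoeff₂ b k l (fun x y => f x * g y)
      = walCoeff b k f * (starRingEnd ℂ) (walCoeff b l fun y => (starRingEnd ℂ) (g y)) := by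
  have h : ∀ x y, f x * g y * (starRingEnd ℂ) (walsh b k x) * walsh b l y
      = f x * (starRingEnd ℂ) (walsh b k x) * (g y * walsh b l y) := fun x y => by ring
  simp only [walCoeff₂, walCoeff, h, integral_const_mul, integral_mul_const, ← integral_conj,
    map_mul, Complex.conj_conj]

/-- Self-similarity of Walsh coefficients: cutting `[0,1)` into `b` pieces strips the lowest
digit off `k`. -/
lemma walCoeff_split {b : ℕ} (hb : 2 ≤ b) (k : ℕ) {f : ℝ → ℂ} (hf : Continuous f) :
    walCoeff b k f = (1 / b : ℂ) * ∑ a ∈ Finset.range b,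
      (starRingEnd ℂ (rootU b ^ (k % b))) ^ a * walCoeff b (k / b) fun x => f ((a + x) / b) := by
  unfold walCoeff
  rw [integral_split hb _ (integrableOn_mul_conj_walsh b k hf)]
  congr 1
  refine Finset.sum_congr rfl fun a ha => ?_
  rw [← integral_const_mul]
  refine setIntegral_congr_fun measurableSet_Ico fun x hx => ?_
  simp only [walsh_shift hb k (Finset.mem_range.1 ha) hx, map_mul, map_pow]
  ring

/-- Bivariate version of `walCoeff_split`. -/
lemma walCoeff₂_split {b : ℕ} (hb : 2 ≤ b) (k l : ℕ) {f : ℝ → ℝ → ℂ}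
    (hf : Continuous (Function.uncurry f)) :
    walCoeff₂ b k l f = (1 / b : ℂ) * ∑ a ∈ Finset.range b, (1 / b : ℂ) * ∑ c ∈ Finset.range b,
      (starRingEnd ℂ (rootU b ^ (k % b))) ^ a * (rootU b ^ (l % b)) ^ c *
        walCoeff₂ b (k / b) (l / b) fun x y => f ((a + x) / b) ((c + y) / b) := by
  have hy : ∀ x, IntegrableOn (fun y => f x y * (starRingEnd ℂ) (walsh b k x) * walsh b l y)
      (Set.Ico (0 : ℝ) 1) := by
    intro x
    have h1 : IntegrableOn (fun y => f x y * (starRingEnd ℂ) (walsh b k x))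
        (Set.Ico (0 : ℝ) 1) := by
      have : Continuous fun y => f x y * (starRingEnd ℂ) (walsh b k x) :=
        (hf.comp (Continuous.prodMk_right x)).mul continuous_const
      exact (this.continuousOn.integrableOn_compact isCompact_Icc).mono_set
        Set.Ico_subset_Icc_self
    refine h1.mul_bdd (c := 1) (measurable_walsh b l).aestronglyMeasurable ?_
    exact Filter.Eventually.of_forall fun x => by simp [norm_walsh]
  have hx := (integrable_walsh₂ b k l hf).integral_prod_left
  unfold walCoeff₂
  rw [integral_split hb _ hx]
  congr 1
  refine Finset.sum_congr rfl fun a ha => ?_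
  simp_rw [integral_split hb _ (hy _)]
  rw [integral_const_mul]
  congr 1
  rw [integral_finsetSum]
  · refine Finset.sum_congr rfl fun c hc => ?_
    rw [← integral_const_mul]
    refine setIntegral_congr_fun measurableSet_Ico fun x hx => ?_
    rw [← integral_const_mul]
    refine setIntegral_congr_fun measurableSet_Ico fun y hy => ?_
    simp only [walsh_shift hb k (Finset.mem_range.1 ha) hx,
      walsh_shift hb l (Finset.mem_range.1 hc) hy, map_mul, map_pow]
    ring
  · intro c hc
    have hg : Continuous (Function.uncurry fun x y : ℝ =>
        (starRingEnd ℂ (rootU b ^ (k % b))) ^ a * (rootU b ^ (l % b)) ^ c *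
          f ((a + x) / b) ((c + y) / b)) := by
      refine continuous_const.mul ?_
      exact hf.comp (f := fun p : ℝ × ℝ => (((a : ℝ) + p.1) / b, ((c : ℝ) + p.2) / b))
        (by fun_prop)
    have h2 := (integrable_walsh₂ b (k / b) (l / b) hg).integral_prod_left
    refine IntegrableOn.congr_fun (μ := volume) h2 ?_ measurableSet_Ico
    intro x hx
    refine setIntegral_congr_fun measurableSet_Ico fun y hy => ?_
    simp only [walsh_shift hb k (Finset.mem_range.1 ha) hx,
      walsh_shift hb l (Finset.mem_range.1 hc) hy, map_mul, map_pow]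
    ring

/-! ### Vanishing for polynomials -/

/-- A monomial of degree `r` is orthogonal to every Walsh function whose index has more than `r`
nonzero digits. -/
lemma walCoeff_pow {b : ℕ} (hb : 2 ≤ b) (N : ℕ) : ∀ k r : ℕ, r < digitCount b N k →
    walCoeff b k (fun x => (x : ℂ) ^ r) = 0 := by
  induction N with
  | zero => intro k r h; simp [digitCount] at h
  | succ N ih =>
    intro k r h
    rw [digitCount_succ] at h
    have hb0 : (b : ℂ) ≠ 0 := by norm_cast; omega
    rw [walCoeff_split hb k (by fun_prop)]
    -- The lower-order terms of `((a + x) / b) ^ r` vanish by induction, whatever the lowest digit.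
    have e : ∀ a : ℕ, walCoeff b (k / b) (fun x => (((a + x) / b : ℝ) : ℂ) ^ r)
        = (1 / b : ℂ) ^ r * walCoeff b (k / b) (fun x => (x : ℂ) ^ r) := by
      intro a
      have : (fun x : ℝ => (((a + x) / b : ℝ) : ℂ) ^ r) = fun x : ℝ =>
          ∑ i ∈ Finset.range (r + 1),
            ((1 / b : ℂ) ^ r * ((a : ℂ) ^ (r - i) * r.choose i)) * (x : ℂ) ^ i := by
        funext x
        push_cast
        rw [div_eq_mul_one_div, mul_pow, add_comm, add_pow, Finset.sum_mul]
        exact Finset.sum_congr rfl fun i _ => by ring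
      rw [this, walCoeff_sum _ _ _ _ _ (fun i _ => by fun_prop), Finset.sum_range_succ,
        Finset.sum_eq_zero]
      · simp
      · intro i hi
        rw [ih, mul_zero]
        have := Finset.mem_range.1 hi
        split_ifs at h <;> omega
    simp_rw [e]
    by_cases h0 : k % b = 0
    · rw [ih (k / b) r (by simpa [h0] using h)]
      simp
    · rw [← Finset.sum_mul]
      have := sum_root_pow hb (Nat.mod_lt k (by omega)) (show 0 < b by omega) h0
      simp only [pow_zero, one_pow, mul_one] at this
      rw [this]
      simp

lemma walCoeff_polynomial {b : ℕ} (hb : 2 ≤ b) (N k : ℕ) (p : Polynomial ℂ)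
    (h : p.natDegree < digitCount b N k) : walCoeff b k (fun x => p.eval (x : ℂ)) = 0 := by
  simp_rw [Polynomial.eval_eq_sum_range]
  rw [walCoeff_sum _ _ _ _ _ (fun i _ => by fun_prop)]
  refine Finset.sum_eq_zero fun i hi => ?_
  rw [walCoeff_pow hb N, mul_zero]
  have := Finset.mem_range.1 hi
  omega

/-- A product `p(x) q(y)` of total degree below the total number of nonzero digits of `(k, l)` has
vanishing `(k, l)`-th Walsh coefficient; `q` is real because the second variable is not
conjugated. -/
lemma walCoeff₂_polynomial {b : ℕ} (hb : 2 ≤ b) (N k l : ℕ) (p : Polynomial ℂ) (q : Polynomial ℝ)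
    (h : p.natDegree + q.natDegree < digitCount b N k + digitCount b N l) :
    walCoeff₂ b k l (fun x y => p.eval (x : ℂ) * (q.eval y : ℝ)) = 0 := by
  rw [walCoeff₂_mul b k l (fun x => p.eval (x : ℂ)) (fun y => ((q.eval y : ℝ) : ℂ))]
  rcases lt_or_ge p.natDegree (digitCount b N k) with h1 | h1
  · rw [walCoeff_polynomial hb N k p h1, zero_mul]
  · have e : ∀ y : ℝ, ((q.eval y : ℝ) : ℂ) = (q.map (algebraMap ℝ ℂ)).eval (y : ℂ) := by
      intro y
      rw [Polynomial.eval_map_algebraMap, ← Complex.coe_algebraMap, Polynomial.aeval_algebraMap_apply]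
      simp
    simp_rw [Complex.conj_ofReal, e]
    rw [walCoeff_polynomial hb N l _ (by rw [Polynomial.natDegree_map]; omega)]
    simp

lemma walCoeff₂_shift_pow {b : ℕ} (hb : 2 ≤ b) (N k l m : ℕ) (A : ℂ)
    (h : m < digitCount b N k + digitCount b N l) :
    walCoeff₂ b k l (fun x y => (A + x - y) ^ m) = 0 := by
  have e : (fun x y : ℝ => (A + x - y) ^ m) = fun x y : ℝ => ∑ i ∈ Finset.range (m + 1),
      (m.choose i : ℂ) * (((Polynomial.C A + Polynomial.X) ^ i).eval (x : ℂ)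
        * (((-Polynomial.X : Polynomial ℝ) ^ (m - i)).eval y : ℝ)) := by
    funext x y
    rw [sub_eq_add_neg, add_pow]
    refine Finset.sum_congr rfl fun i _ => ?_
    simp
    ring
  rw [e, walCoeff₂_sum]
  · refine Finset.sum_eq_zero fun i hi => ?_
    rw [walCoeff₂_polynomial hb N, mul_zero]
    refine lt_of_le_of_lt (add_le_add (Polynomial.natDegree_pow_le) (Polynomial.natDegree_pow_le)) ?_
    have h1 : (Polynomial.C A + Polynomial.X).natDegree ≤ 1 := by compute_degree
    have h2 : (-Polynomial.X : Polynomial ℝ).natDegree ≤ 1 := by compute_degree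
    have := Finset.mem_range.1 hi
    nlinarith [Nat.mul_le_mul_left i h1, Nat.mul_le_mul_left (m - i) h2,
      Nat.add_sub_cancel' (show i ≤ m by omega)]
  · intro i _
    simp only [Function.uncurry_def]
    fun_prop

/-! ### Vanishing for powers of `|x - y|` and for the kernel -/

/-- Off the diagonal blocks `|x - y|^m` is a polynomial of degree `m`; the diagonal blocks cancel
when the lowest digits of `k` and `l` differ, and reproduce `|x - y|^m` when they agree. -/
lemma walCoeff₂_abs_pow {b : ℕ} (hb : 2 ≤ b) (m N : ℕ) : ∀ k l : ℕ, m + 1 < diffCount b N k l →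
    walCoeff₂ b k l (fun x y => ((|x - y| : ℝ) : ℂ) ^ m) = 0 := by
  induction N with
  | zero => intro k l h; simp [diffCount] at h
  | succ N ih =>
    intro k l h
    rw [diffCount_succ] at h
    have hbp : (0 : ℝ) < b := by positivity
    have hd := diffCount_le b N (k / b) (l / b)
    have hlt : m < digitCount b N (k / b) + digitCount b N (l / b) := by
      split_ifs at h <;> omega
    -- On `[0,1)²` the sign of `(a + x) - (c + y)` is that of `a - c` when `a ≠ c`.
    have hoff : ∀ a c : ℕ, a ≠ c → walCoeff₂ b (k / b) (l / b)
        (fun x y => ((|((a : ℝ) + x) / b - (c + y) / b| : ℝ) : ℂ) ^ m) = 0 := by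
      intro a c hac
      obtain ⟨σ, hσ⟩ : ∃ σ : ℝ, ∀ x ∈ Set.Ico (0 : ℝ) 1, ∀ y ∈ Set.Ico (0 : ℝ) 1,
          |((a : ℝ) + x) / b - (c + y) / b| = σ * (((a : ℝ) - c) + x - y) := by
        rcases lt_or_gt_of_ne hac with hlt | hlt
        · refine ⟨-(1 / b), fun x hx y hy => ?_⟩
          have h1 : (a : ℝ) + 1 ≤ c := by exact_mod_cast hlt
          rw [← sub_div, abs_div, abs_of_pos hbp, abs_of_nonpos (by linarith [hx.2, hy.1])]
          ring
        · refine ⟨1 / b, fun x hx y hy => ?_⟩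
          have h1 : (c : ℝ) + 1 ≤ a := by exact_mod_cast hlt
          rw [← sub_div, abs_div, abs_of_pos hbp, abs_of_nonneg (by linarith [hx.1, hy.2])]
          ring
      rw [walCoeff₂_congr (g := fun x y => (σ : ℂ) ^ m * (((a : ℂ) - c) + x - y) ^ m),
        walCoeff₂_const_mul, walCoeff₂_shift_pow hb N _ _ _ _ hlt, mul_zero]
      intro x hx y hy
      rw [hσ x hx y hy, ← mul_pow]
      push_cast
      rfl
    have hdiag : ∀ a : ℕ, walCoeff₂ b (k / b) (l / b)
        (fun x y => ((|((a : ℝ) + x) / b - (a + y) / b| : ℝ) : ℂ) ^ m) = (1 / b : ℂ) ^ m *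
          walCoeff₂ b (k / b) (l / b) (fun x y => ((|x - y| : ℝ) : ℂ) ^ m) := by
      intro a
      rw [← walCoeff₂_const_mul]
      congr 1
      funext x y
      rw [← sub_div, abs_div, abs_of_pos hbp, add_sub_add_left_eq_sub]
      push_cast
      ring
    rw [walCoeff₂_split hb k l (by simp only [Function.uncurry_def]; fun_prop)]
    have hinner : ∀ a ∈ Finset.range b, ∑ c ∈ Finset.range b,
        (starRingEnd ℂ (rootU b ^ (k % b))) ^ a * (rootU b ^ (l % b)) ^ c *
          walCoeff₂ b (k / b) (l / b)
            (fun x y => ((|((a : ℝ) + x) / b - (c + y) / b| : ℝ) : ℂ) ^ m)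
        = (starRingEnd ℂ (rootU b ^ (k % b))) ^ a * (rootU b ^ (l % b)) ^ a * ((1 / b : ℂ) ^ m *
          walCoeff₂ b (k / b) (l / b) (fun x y => ((|x - y| : ℝ) : ℂ) ^ m)) := by
      intro a ha
      rw [Finset.sum_eq_single a, hdiag]
      · intro c _ hc
        rw [hoff a c hc.symm, mul_zero]
      · intro hn
        exact absurd ha hn
    rw [← Finset.mul_sum, Finset.sum_congr rfl hinner, ← Finset.sum_mul]
    by_cases h0 : k % b = l % b
    · rw [ih (k / b) (l / b) (by simpa [h0] using h)]
      simp
    · rw [sum_root_pow hb (Nat.mod_lt k (by omega)) (Nat.mod_lt l (by omega)) h0]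
      simp

lemma bernoulliPoly_eq (r : ℕ) (x : ℝ) : bernoulliPoly r x
    = ((Polynomial.bernoulli r).map (algebraMap ℚ ℝ)).eval x := by
  rw [bernoulliPoly, Polynomial.eval_map_algebraMap]

lemma natDegree_bernoulli_map_le (r : ℕ) {R : Type*} [Field R] [Algebra ℚ R] :
    ((Polynomial.bernoulli r).map (algebraMap ℚ R)).natDegree ≤ r := by
  rw [Polynomial.natDegree_map]
  rw [Polynomial.natDegree_le_iff_coeff_eq_zero]
  intro n hn
  rw [Polynomial.coeff_bernoulli, if_neg (by omega)]

lemma Khat_eq_zero {b : ℕ} (hb : 2 ≤ b) (α k l N : ℕ)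
    (h : 2 * α < diffCount b N k l) : Khat b α k l = 0 := by
  have hd := diffCount_le b N k l
  have cb : ∀ r, Continuous (bernoulliPoly r) := fun r => by
    simp only [funext (bernoulliPoly_eq r)]
    exact Polynomial.continuous _
  have h1 : ∀ r ≤ α, walCoeff₂ b k l
      (fun x y => (bernoulliPoly r x : ℂ) * (bernoulliPoly r y : ℂ)) = 0 := by
    intro r hr
    have e : ∀ x : ℝ, (bernoulliPoly r x : ℂ)
        = ((Polynomial.bernoulli r).map (algebraMap ℚ ℂ)).eval (x : ℂ) := by
      intro x
      rw [bernoulliPoly, Polynomial.eval_map_algebraMap, ← Complex.coe_algebraMap,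
        Polynomial.aeval_algebraMap_apply]
    have e2 : (fun x y : ℝ => (bernoulliPoly r x : ℂ) * (bernoulliPoly r y : ℂ))
        = fun x y : ℝ => ((Polynomial.bernoulli r).map (algebraMap ℚ ℂ)).eval (x : ℂ) *
          ((((Polynomial.bernoulli r).map (algebraMap ℚ ℝ)).eval y : ℝ) : ℂ) := by
      funext x y
      rw [e x, bernoulliPoly_eq r y]
    rw [e2, walCoeff₂_polynomial hb N]
    have := natDegree_bernoulli_map_le r (R := ℂ)
    have := natDegree_bernoulli_map_le r (R := ℝ)
    omega
  have h2 : walCoeff₂ b k l (fun x y => (bernoulliPoly (2 * α) |x - y| : ℂ)) = 0 := by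
    simp_rw [bernoulliPoly_eq, Polynomial.eval_eq_sum_range]
    push_cast
    rw [walCoeff₂_sum]
    · refine Finset.sum_eq_zero fun i hi => ?_
      have hi' := Finset.mem_range.1 hi
      have hdeg := natDegree_bernoulli_map_le (2 * α) (R := ℝ)
      rcases (show i + 1 ≤ 2 * α ∨ i = 2 * α by omega) with hi2 | hi2
      · rw [walCoeff₂_abs_pow hb i N k l (by omega), mul_zero]
      -- The top power is even, so the absolute value can be dropped.
      · have e : (fun x y : ℝ => ((|x - y| : ℝ) : ℂ) ^ i)
            = fun x y : ℝ => ((0 : ℂ) + x - y) ^ i := by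
          funext x y
          rw [← Complex.ofReal_pow, hi2, pow_mul, sq_abs, ← pow_mul]
          push_cast
          ring
        rw [e, walCoeff₂_shift_pow hb N k l i 0 (by omega), mul_zero]
    · intro i _
      simp only [Function.uncurry_def]
      fun_prop
  -- The kernel as one sum over `r ≤ α + 1`, the last index standing for the `B_{2α}` term.
  have e : Khat b α k l = walCoeff₂ b k l (fun x y => ∑ r ∈ Finset.range (α + 2),
      (if r ≤ α then 1 / ((r.factorial : ℂ)) ^ 2
        else (-1 : ℂ) ^ (α + 1) / ((2 * α).factorial : ℂ)) *
      (if r ≤ α then (bernoulliPoly r x : ℂ) * (bernoulliPoly r y : ℂ)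
        else (bernoulliPoly (2 * α) |x - y| : ℂ))) := by
    show walCoeff₂ b k l (fun x y => (Kker α x y : ℂ)) = _
    congr 1
    funext x y
    rw [Finset.sum_range_succ, Kker]
    push_cast
    congr 1
    · refine Finset.sum_congr rfl fun r hr => ?_
      have : r ≤ α := by have := Finset.mem_range.1 hr; omega
      simp only [this, if_true]
      ring
    · simp
      ring
  rw [e, walCoeff₂_sum b k l _ _ (fun r x y => if r ≤ α then _ else _)]
  · refine Finset.sum_eq_zero fun r _ => ?_
    by_cases hr : r ≤ α
    · simp only [hr, if_true, h1 r hr, mul_zero]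
    · simp only [hr, if_false, h2, mul_zero]
  · intro r _
    have := cb r
    have := cb (2 * α)
    by_cases hr : r ≤ α
    · simp only [hr, if_true, Function.uncurry_def]
      fun_prop
    · simp only [hr, if_false, Function.uncurry_def]
      fun_prop

/-- No integrability is needed: the product formula for integrals over `Measure.pi` holds
unconditionally. -/
lemma KhatS_eq_prod (b α s : ℕ) (k l : Fin s → ℕ) :
    KhatS b α s k l = ∏ j, Khat b α (k j) (l j) := by
  unfold KhatS Khat walshVec
  simp only [volume_pi, Measure.restrict_pi_pi, map_prod, Complex.ofReal_prod,
    ← Finset.prod_mul_distrib]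
  have h1 : ∀ x : Fin s → ℝ, (∫ y, ∏ j, ((Kker α (x j) (y j) : ℂ) *
      (starRingEnd ℂ) (walsh b (k j) (x j)) * walsh b (l j) (y j))
        ∂(Measure.pi fun _ : Fin s => volume.restrict (Set.Ico (0 : ℝ) 1)))
      = ∏ j, ∫ y in Set.Ico (0 : ℝ) 1, (Kker α (x j) y : ℂ) *
      (starRingEnd ℂ) (walsh b (k j) (x j)) * walsh b (l j) y := fun x =>
    integral_fintype_prod_eq_prod (fun j y => (Kker α (x j) y : ℂ) *
      (starRingEnd ℂ) (walsh b (k j) (x j)) * walsh b (l j) y)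
  simp_rw [h1]
  exact integral_fintype_prod_eq_prod (fun j x => ∫ y in Set.Ico (0 : ℝ) 1, (Kker α x y : ℂ) *
      (starRingEnd ℂ) (walsh b (k j) x) * walsh b (l j) y)

/-- Corollary 1. For a prime `b` and `s, α ∈ ℕ` with `α ≥ 2`, if
`k, l ∈ ℕ₀^s` satisfy `κ(k ⊖ l) > 2αs`, then `K̂_{α,s}(k,l) = 0`. -/
theorem khatS_sparse (b s α : ℕ) (hb : b.Prime) (hs : 0 < s) (hα : 2 ≤ α)
    (k l : Fin s → ℕ) (h : 2 * α * s < hammingVec b fun j => dsub b (k j) (l j)) :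
    KhatS b α s k l = 0 := by
  -- Pigeonhole: some coordinate has `κ(k_j ⊖ l_j) > 2α`.
  obtain ⟨j, hj⟩ : ∃ j, 2 * α < hamming b (dsub b (k j) (l j)) := by
    by_contra! hcon
    have : hammingVec b (fun j => dsub b (k j) (l j)) ≤ ∑ _j : Fin s, 2 * α :=
      Finset.sum_le_sum fun j _ => hcon j
    simp only [Finset.sum_const, Finset.card_univ, Fintype.card_fin, smul_eq_mul] at this
    nlinarith
  rw [KhatS_eq_prod]
  exact Finset.prod_eq_zero (Finset.mem_univ j)
    (Khat_eq_zero hb.two_le α _ _ _ (hj.trans_le (hamming_dsub_le hb.two_le _ _)))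
end

section
/- Let b be a prime, s ∈ ℕ, and α, β ∈ ℕ with 2 ≤ α and β ≥ 2α; set A := (α−1)/(β−1) and B := (β−α)/(β−1). For every digital net P ⊂ [0,1)^s over F_b with generating matrices in F_b^{n×m}, one has ∑_{k ∈ P⊥ \ {0}} b^{−2μ_α(k)} ≤ b · (1 − b^{−(2B−1)})^{−s} · (μ_1(P) + 1)^{s−1} · b^{−2A·μ_β(P) − 2B·μ_1(P)}. -/
/-!
Write `ρ = μ_1(P)`. The exponents `a_1 > a_2 > ⋯` of the nonzero digits of an integer decrease,
so the average of `a_2, …, a_α` is at least that of `a_2, …, a_β` (missing exponents count as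
`0`). This gives `μ_α ≥ A μ_β + B μ_1` (`dick_interp`), hence each term of the sum is at most
`b^{-2A μ_β(P)} b^{-2B μ_1(k)}`, and it remains to bound the sum of `b^{-d μ_1(k)}` over the
nonzero dual net, where `d = 2B > 1` because `β ≥ 2α` (`nrt_sum_bound`).

For `l ∈ ℕ₀^s` of total `L ≥ ρ`, at most `b^{L-ρ+1}` dual vectors satisfy `μ_1(k_j) ≤ l_j` for all
`j` (`card_dual_box`): choose `l' ≤ l` of total `ρ - 1`; two dual vectors in the box that agree in
all digits at positions `≥ l'_j` have a digitwise difference in the dual net of NRT metric less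
than `ρ`, so they are equal (`dual_eq_of_div_eq`). For `L < ρ` there is no nonzero dual vector
with these coordinate metrics. With `x = b^{-(d-1)}` the sum is thus at most `b^{1-ρ}` times the
sum of `x^L` over all `l` with `L ≥ ρ`, which is at most `(1-x)^{-s} x^ρ (ρ+1)^{s-1}`
(`multi_geom_tail`).
-/

open scoped BigOperators

/-- The column vector of the first `n` `b`-adic digits of `k`, as a vector over `F_b = ZMod b`. -/
def trv (b n : ℕ) (k : ℕ) : Fin n → ZMod b := fun i => (bdigit b k i.1 : ZMod b)

/-- The dual net `P⊥` of the digital net with generating matrices `C`. -/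
def dualNet (b : ℕ) {s n m : ℕ} (C : Fin s → Matrix (Fin n) (Fin m) (ZMod b)) :
    Set (Fin s → ℕ) :=
  {k | (∀ j, k j < b ^ n) ∧ ∑ j, ((C j).transpose).mulVec (trv b n (k j)) = 0}

/-- The dual net `P∞⊥` of the digital net with generating matrices `C` (no upper bound
on the components of `k`). -/
def dualNetInf (b : ℕ) {s n m : ℕ} (C : Fin s → Matrix (Fin n) (Fin m) (ZMod b)) :
    Set (Fin s → ℕ) :=
  {k | ∑ j, ((C j).transpose).mulVec (trv b n (k j)) = 0}

/-- The `h`-th point of the digital net generated by the matrices `C` over `ZMod b`: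
its `j`-th coordinate is `∑_{i=1}^n ξ_i b^{-i}` with `(ξ_1,…,ξ_n)ᵀ = C_j · (η_0,…,η_{m-1})ᵀ`,
where `η` are the `b`-adic digits of `h`. -/
noncomputable def netPoint (b : ℕ) {s n m : ℕ} (C : Fin s → Matrix (Fin n) (Fin m) (ZMod b))
    (h : ℕ) : Fin s → ℝ :=
  fun j => ∑ i : Fin n,
    (((C j).mulVec (fun v : Fin m => (bdigit b h v.1 : ZMod b)) i).val : ℝ) / (b : ℝ) ^ (i.1 + 1)

/-- Sum of the `α` largest elements of a finite set of (0-based) row indices, counted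
1-based, i.e. each index `i` contributes `i + 1`. -/
def topSum (α : ℕ) (R : Finset ℕ) : ℕ := (((R.sort (· ≤ ·)).reverse.take α).map (· + 1)).sum

/-- The digital net with generating matrices `C_1,…,C_s ∈ F_b^{n×m}` is an order `α`
digital `(t,m,s)`-net: for every choice of rows `i_{j,v_j} < ⋯ < i_{j,1}` from each `C_j`
such that the 1-based indices of the `min(α, v_j)` largest chosen rows of each matrix sum
to at most `αm - t`, the chosen rows are linearly independent over `F_b`. -/
def isOrderNet (b α t m : ℕ) {s n : ℕ} (C : Fin s → Matrix (Fin n) (Fin m) (ZMod b)) : Prop :=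
  ∀ R : Fin s → Finset (Fin n),
    (∑ j, topSum α ((R j).image Fin.val)) ≤ α * m - t →
    LinearIndependent (ZMod b) fun p : Σ j : Fin s, {i : Fin n // i ∈ R j} => C p.1 p.2.1

/-- The minimum Dick metric `μ_α(P)` of the digital net with generating matrices `C`,
namely the minimum of `μ_α(k)` over nonzero elements `k` of the dual net. -/
noncomputable def minDick (b α : ℕ) {s n m : ℕ}
    (C : Fin s → Matrix (Fin n) (Fin m) (ZMod b)) : ℕ :=
  sInf (dickVec b α '' {k | k ∈ dualNet b C ∧ k ≠ 0})

/-- The minimum Hamming metric `κ(P)` of the digital net with generating matrices `C`. -/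
noncomputable def minHamming (b : ℕ) {s n m : ℕ}
    (C : Fin s → Matrix (Fin n) (Fin m) (ZMod b)) : ℕ :=
  sInf (hammingVec b '' {k | k ∈ dualNet b C ∧ k ≠ 0})

/-! ### Interpolation between Dick metrics -/

lemma sum_take_eq (l : List ℕ) (p : ℕ) :
    (l.take p).sum = ∑ i ∈ Finset.range p, l.getD i 0 := by
  induction p generalizing l with
  | zero => simp
  | succ p ih =>
    cases l with
    | nil => simp
    | cons a t =>
      rw [Finset.sum_range_succ']
      simp only [List.take_succ_cons, List.sum_cons, ih, List.getD_cons_succ, List.getD_cons_zero]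
      omega

/-- The averages of the initial segments of a nonincreasing sequence are nonincreasing. -/
lemma sum_range_antitone (f : ℕ → ℕ) (hf : Antitone f) (p q : ℕ) (h : p ≤ q) :
    p * ∑ i ∈ Finset.range q, f i ≤ q * ∑ i ∈ Finset.range p, f i := by
  induction q, h using Nat.le_induction with
  | base => exact le_rfl
  | succ q hq ih =>
    have h1 : p * f q ≤ ∑ i ∈ Finset.range p, f i := by
      have := Finset.card_nsmul_le_sum (Finset.range p) f (f q)
        (fun i hi => hf ((Finset.mem_range.1 hi).le.trans hq))
      simpa using this
    rw [Finset.sum_range_succ]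
    nlinarith

lemma getD_antitone (l : List ℕ) (h : l.Pairwise (· ≥ ·)) : Antitone fun i => l.getD i 0 := by
  intro i j hij
  simp only [List.getD_eq_getElem?_getD]
  rcases hij.eq_or_lt with rfl | hlt
  · exact le_rfl
  by_cases hj : j < l.length
  · have hi : i < l.length := hlt.trans hj
    rw [List.getElem?_eq_getElem hi, List.getElem?_eq_getElem hj]
    exact List.pairwise_iff_getElem.1 h i j hi hj hlt
  · rw [List.getElem?_eq_none (not_lt.1 hj)]
    simp

lemma exponents_pairwise (b k : ℕ) :
    (((bsupp b k).sort (· ≤ ·)).reverse).Pairwise (· ≥ ·) := by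
  rw [List.pairwise_reverse]
  exact Finset.pairwise_sort _ _

/-- Interpolation of `μ_α` between `μ_β` and `μ_1`, with denominators cleared: the exponents
`a_2 ≥ a_3 ≥ ⋯` average at least as much over `2..α` as over `2..β`. -/
lemma dick_interp (b k α β : ℕ) (hα : 1 ≤ α) (hβ : α ≤ β) :
    (α - 1) * dick b β k + (β - α) * dick b 1 k ≤ (β - 1) * dick b α k := by
  obtain ⟨p, rfl⟩ := Nat.exists_eq_add_of_le' hα
  obtain ⟨q, rfl⟩ := Nat.exists_eq_add_of_le' hβ
  unfold dick
  simp only [List.map_take]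
  have hs : ((((bsupp b k).sort (· ≤ ·)).reverse).map (· + 1)).Pairwise (· ≥ ·) := by
    rw [List.pairwise_map]
    exact (exponents_pairwise b k).imp (fun h => by omega)
  generalize (((bsupp b k).sort (· ≤ ·)).reverse).map (· + 1) = l at hs
  cases l with
  | nil => simp
  | cons a t =>
    have ht := getD_antitone t (List.pairwise_cons.1 hs).2
    have key := sum_range_antitone _ ht p (q + p) (by omega)
    rw [← sum_take_eq, ← sum_take_eq] at key
    have e1 : q + (p + 1) = (q + p) + 1 := by ring
    have e2 : q + p + 1 - (p + 1) = q := by omega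
    rw [e1]
    simp only [List.take_succ_cons, List.sum_cons, List.take_zero, List.sum_nil, e2,
      Nat.add_sub_cancel]
    nlinarith

/-! ### Digits and the NRT metric -/

lemma bdigit_of_lt {b k i : ℕ} (h : k < b ^ i) : bdigit b k i = 0 := by
  simp [bdigit, Nat.div_eq_of_lt h]

lemma eq_of_bdigit_eq {b : ℕ} (n : ℕ) {k l : ℕ} (hk : k < b ^ n) (hl : l < b ^ n)
    (h : ∀ i < n, bdigit b k i = bdigit b l i) : k = l := by
  induction n generalizing k l with
  | zero => simp at hk hl; omega
  | succ n ih =>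
    have h0 := h 0 (by omega)
    simp only [bdigit, pow_zero, Nat.div_one] at h0
    rw [pow_succ] at hk hl
    have := @ih (k / b) (l / b) (Nat.div_lt_of_lt_mul (by linarith))
      (Nat.div_lt_of_lt_mul (by linarith)) (fun i hi => by
        have := h (i + 1) (by omega)
        simpa [bdigit, Nat.div_div_eq_div_mul, pow_succ'] using this)
    rw [← Nat.div_add_mod k b, ← Nat.div_add_mod l b, this, h0]

lemma lt_pow_of_bdigit {b : ℕ} (hb : b.Prime) {k l : ℕ} (h : ∀ i, l ≤ i → bdigit b k i = 0) :
    k < b ^ l := by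
  have hpos : 0 < b ^ l := pow_pos hb.pos _
  have hk : k < b ^ k := Nat.lt_pow_self hb.one_lt
  have : k = k % b ^ l := by
    refine eq_of_bdigit_eq k hk ((Nat.mod_le _ _).trans_lt hk) fun i _ => ?_
    rcases le_or_gt l i with hi | hi
    · rw [h i hi, bdigit_of_lt]
      exact (Nat.mod_lt _ hpos).trans_le (Nat.pow_le_pow_right hb.pos hi)
    · obtain ⟨c, rfl⟩ := Nat.exists_eq_add_of_lt hi
      unfold bdigit
      rw [add_assoc, pow_add, Nat.mod_mul_right_div_self, pow_succ', Nat.mod_mul_right_mod]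
  rw [this]
  exact Nat.mod_lt _ hpos

lemma mem_bsupp {b : ℕ} (hb : b.Prime) (k i : ℕ) : i ∈ bsupp b k ↔ bdigit b k i ≠ 0 := by
  simp only [bsupp, Finset.mem_filter, Finset.mem_range, and_iff_right_iff_imp]
  intro h
  by_contra hlt
  exact h (bdigit_of_lt ((Nat.lt_pow_self hb.one_lt).trans_le
    (Nat.pow_le_pow_right hb.pos (by omega))))

/-- The NRT metric is the number of digits in base `b`. -/
lemma dick_one_le_iff {b : ℕ} (hb : b.Prime) (k l : ℕ) : dick b 1 k ≤ l ↔ k < b ^ l := by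
  have h1 : dick b 1 k ≤ l ↔ ∀ i ∈ bsupp b k, i < l := by
    have hp := exponents_pairwise b k
    have hm : ∀ i, i ∈ ((bsupp b k).sort (· ≤ ·)).reverse ↔ i ∈ bsupp b k := by simp
    simp only [← hm]
    unfold dick
    generalize ((bsupp b k).sort (· ≤ ·)).reverse = L at hp
    cases L with
    | nil => simp
    | cons a t =>
      have := (List.pairwise_cons.1 hp).1
      simp only [List.take_succ_cons, List.take_zero, List.map_cons, List.map_nil, List.sum_cons,
        List.sum_nil, List.mem_cons]
      constructor
      · rintro h i (rfl | hi)
        · omega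
        · have := this i hi
          omega
      · intro h
        have := h a (Or.inl rfl)
        omega
  rw [h1]
  constructor
  · intro h
    refine lt_pow_of_bdigit hb fun i hi => ?_
    by_contra hne
    exact absurd (h i ((mem_bsupp hb k i).2 hne)) (by omega)
  · intro h i hi
    by_contra hlt
    exact (mem_bsupp hb k i).1 hi
      (bdigit_of_lt (h.trans_le (Nat.pow_le_pow_right hb.pos (by omega))))

lemma bdigit_lt {b : ℕ} (hb : b.Prime) (k i : ℕ) : bdigit b k i < b := Nat.mod_lt _ hb.pos

lemma bdigit_cast_inj {b : ℕ} (hb : b.Prime) {k l i : ℕ}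
    (h : (bdigit b k i : ZMod b) = bdigit b l i) : bdigit b k i = bdigit b l i := by
  rw [ZMod.natCast_eq_natCast_iff] at h
  exact Nat.ModEq.eq_of_lt_of_lt h (bdigit_lt hb _ _) (bdigit_lt hb _ _)

lemma trv_inj {b : ℕ} (hb : b.Prime) {n k l : ℕ} (hk : k < b ^ n) (hl : l < b ^ n)
    (h : trv b n k = trv b n l) : k = l :=
  eq_of_bdigit_eq n hk hl fun i hi => bdigit_cast_inj hb (congrFun h ⟨i, hi⟩)

lemma trv_surj {b : ℕ} (hb : b.Prime) (n : ℕ) (d : Fin n → ZMod b) :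
    ∃ k < b ^ n, trv b n k = d := by
  have : NeZero b := ⟨hb.ne_zero⟩
  have hbij : Function.Bijective (fun k : Fin (b ^ n) => trv b n k.1) := by
    rw [Fintype.bijective_iff_injective_and_card]
    refine ⟨fun k l h => Fin.ext (trv_inj hb k.2 l.2 h), ?_⟩
    simp [ZMod.card]
  obtain ⟨k, hk⟩ := hbij.2 d
  exact ⟨k.1, k.2, hk⟩

/-! ### Counting dual vectors in boxes -/

lemma exists_le_sum_eq {s : ℕ} (l : Fin s → ℕ) (r : ℕ) (h : r ≤ ∑ j, l j) :
    ∃ l' : Fin s → ℕ, (∀ j, l' j ≤ l j) ∧ ∑ j, l' j = r := by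
  induction r with
  | zero => exact ⟨fun _ => 0, by simp, by simp⟩
  | succ r ih =>
    obtain ⟨l', hl, hsum⟩ := ih (by omega)
    obtain ⟨j, -, hj⟩ := Finset.exists_lt_of_sum_lt (s := Finset.univ) (f := l') (g := l)
      (by omega)
    refine ⟨l' + Pi.single j 1, fun i => ?_, ?_⟩
    · by_cases hij : i = j
      · subst hij
        simpa using hj
      · simpa [hij] using hl i
    · simp [Finset.sum_add_distrib, hsum]

lemma minDick_le {b γ s n m : ℕ} (C : Fin s → Matrix (Fin n) (Fin m) (ZMod b))
    {k : Fin s → ℕ} (hk : k ∈ dualNet b C) (h0 : k ≠ 0) : minDick b γ C ≤ dickVec b γ k :=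
  Nat.sInf_le ⟨k, ⟨hk, h0⟩, rfl⟩

/-- If two elements of the dual net agree in all digits from position `l' j` on, where `l'` has
total less than `μ_1(P)`, then they coincide: their digitwise difference lies in the dual net
and has NRT metric at most `∑ l' j`. -/
lemma dual_eq_of_div_eq {b s n m : ℕ} (hb : b.Prime)
    (C : Fin s → Matrix (Fin n) (Fin m) (ZMod b)) (l' : Fin s → ℕ)
    (hl : ∑ j, l' j < minDick b 1 C) {k k' : Fin s → ℕ} (hk : k ∈ dualNet b C)
    (hk' : k' ∈ dualNet b C) (h : ∀ j, k j / b ^ l' j = k' j / b ^ l' j) : k = k' := by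
  choose K hKlt hK using fun j => trv_surj hb n (trv b n (k j) - trv b n (k' j))
  have hKmem : K ∈ dualNet b C := by
    refine ⟨hKlt, ?_⟩
    simp only [hK, Matrix.mulVec_sub, Finset.sum_sub_distrib, hk.2, hk'.2, sub_zero]
  have hKd : ∀ j, dick b 1 (K j) ≤ l' j := by
    intro j
    rw [dick_one_le_iff hb]
    refine lt_pow_of_bdigit hb fun i hi => ?_
    by_cases hin : i < n
    · have e := congrFun (hK j) ⟨i, hin⟩
      have e2 : bdigit b (k j) i = bdigit b (k' j) i := by
        obtain ⟨c, rfl⟩ := Nat.exists_eq_add_of_le hi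
        simp only [bdigit, pow_add, ← Nat.div_div_eq_div_mul, h j]
      simp only [trv, Pi.sub_apply, e2, sub_self] at e
      rw [ZMod.natCast_eq_zero_iff] at e
      exact Nat.eq_zero_of_dvd_of_lt e (bdigit_lt hb _ _)
    · exact bdigit_of_lt ((hKlt j).trans_le (Nat.pow_le_pow_right hb.pos (by omega)))
  have hK0 : K = 0 := by
    by_contra h0
    have h1 := minDick_le (γ := 1) C hKmem h0
    have h2 : dickVec b 1 K ≤ ∑ j, l' j := Finset.sum_le_sum fun j _ => hKd j
    omega
  funext j
  refine trv_inj hb (hk.1 j) (hk'.1 j) ?_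
  have := hK j
  rw [hK0] at this
  refine sub_eq_zero.1 (this.symm.trans ?_)
  funext i
  simp [trv, bdigit]

/-- A box of side lengths `b ^ l j` with `∑ l j ≥ μ_1(P) - 1` contains at most
`b ^ (∑ l j - μ_1(P) + 1)` elements of the dual net. Here `μ_1(P) = r + 1`. -/
lemma card_dual_box {b s n m : ℕ} (hb : b.Prime)
    (C : Fin s → Matrix (Fin n) (Fin m) (ZMod b)) (l : Fin s → ℕ) (r : ℕ)
    (hr : minDick b 1 C = r + 1) (hl : r ≤ ∑ j, l j) (D : Finset (Fin s → ℕ))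
    (hD : ∀ k ∈ D, k ∈ dualNet b C) (hDl : ∀ k ∈ D, ∀ j, dick b 1 (k j) ≤ l j) :
    D.card ≤ b ^ (∑ j, l j - r) := by
  obtain ⟨l', hle, hsum⟩ := exists_le_sum_eq l r hl
  have hcard : (Fintype.piFinset fun j => Finset.range (b ^ (l j - l' j))).card
      = b ^ (∑ j, l j - r) := by
    rw [Fintype.card_piFinset]
    simp only [Finset.card_range]
    rw [Finset.prod_pow_eq_pow_sum, Finset.sum_tsub_distrib _ (fun j _ => hle j), hsum]
  rw [← hcard]
  refine Finset.card_le_card_of_injOn (fun k j => k j / b ^ l' j) (fun k hk => ?_) ?_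
  · simp only [Finset.mem_coe, Fintype.mem_piFinset, Finset.mem_range]
    intro j
    apply Nat.div_lt_of_lt_mul
    rw [← pow_add, Nat.add_sub_cancel' (hle j)]
    exact (dick_one_le_iff hb _ _).1 (hDl k hk j)
  · intro k hk k' hk' h
    exact dual_eq_of_div_eq hb C l' (by omega) (hD k hk) (hD k' hk') (fun j => congrFun h j)

/-! ### Multivariate geometric tails -/

lemma sum_geom_le_inv {x : ℝ} (hx0 : 0 ≤ x) (hx1 : x < 1) (S : Finset ℕ) :
    ∑ i ∈ S, x ^ i ≤ (1 - x)⁻¹ := by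
  rw [← tsum_geometric_of_lt_one hx0 hx1]
  exact (summable_geometric_of_lt_one hx0 hx1).sum_le_tsum _ (fun i _ => pow_nonneg hx0 i)

lemma geom_tail_le {x : ℝ} (hx0 : 0 ≤ x) (hx1 : x < 1) (N r : ℕ) :
    ∑ i ∈ Finset.range N, (if r ≤ i then x ^ i else 0) ≤ x ^ r * (1 - x)⁻¹ := by
  have h1 : ∑ i ∈ Finset.range N, (if r ≤ i then x ^ i else 0)
      = ∑ i ∈ Finset.Ico r N, x ^ i := by
    rw [← Finset.sum_filter]
    congr 1
    ext i
    simp [and_comm]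
  rw [h1, Finset.sum_Ico_eq_sum_range]
  simp only [pow_add, ← Finset.mul_sum]
  exact mul_le_mul_of_nonneg_left (sum_geom_le_inv hx0 hx1 _) (pow_nonneg hx0 _)

/-- Tail of the multivariate geometric series, by induction on the dimension: splitting off the
first index `i`, the terms with `i < r` contribute at most `r (r + 1) ^ (s - 1)` and those with
`i ≥ r` at most `1`, in units of `x ^ r (1 - x) ^ (-(s + 1))`. -/
lemma multi_geom_tail {x : ℝ} (hx0 : 0 ≤ x) (hx1 : x < 1) (N : ℕ) (s : ℕ) (hs : 1 ≤ s) (r : ℕ) :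
    ∑ l : Fin s → Fin N, (if r ≤ ∑ j, (l j : ℕ) then x ^ (∑ j, (l j : ℕ)) else 0)
      ≤ ((1 - x)⁻¹) ^ s * x ^ r * ((r : ℝ) + 1) ^ (s - 1) := by
  have hG : (1 : ℝ) ≤ (1 - x)⁻¹ := (one_le_inv₀ (by linarith)).2 (by linarith)
  induction s, hs using Nat.le_induction generalizing r with
  | base =>
    rw [← (Equiv.funUnique (Fin 1) (Fin N)).symm.sum_comp]
    simp only [Finset.univ_unique, Finset.sum_singleton, Equiv.funUnique_symm_apply,
      uniqueElim_const]
    rw [Fin.sum_univ_eq_sum_range (fun i => if r ≤ i then x ^ i else 0) N]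
    simpa [mul_comm] using geom_tail_le hx0 hx1 N r
  | succ s hs ih =>
    set G := (1 - x)⁻¹
    rw [← (Fin.consEquiv (fun _ : Fin (s + 1) => Fin N)).sum_comp, Fintype.sum_prod_type]
    have hinner : ∀ i : Fin N,
        ∑ l : Fin s → Fin N, (if r ≤ ∑ j, ((Fin.consEquiv (fun _ : Fin (s + 1) => Fin N) (i, l) j
            : Fin N) : ℕ) then
          x ^ (∑ j, ((Fin.consEquiv (fun _ : Fin (s + 1) => Fin N) (i, l) j : Fin N) : ℕ)) else 0)
        ≤ G ^ s * ((if (i : ℕ) < r then x ^ r * ((r : ℝ) + 1) ^ (s - 1) else 0)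
            + (if r ≤ (i : ℕ) then x ^ (i : ℕ) else 0)) := by
      intro i
      have hstep : ∀ l : Fin s → Fin N,
          (if r ≤ ∑ j, ((Fin.consEquiv (fun _ : Fin (s + 1) => Fin N) (i, l) j
            : Fin N) : ℕ) then
          x ^ (∑ j, ((Fin.consEquiv (fun _ : Fin (s + 1) => Fin N) (i, l) j : Fin N) : ℕ)) else 0)
          = x ^ (i : ℕ) *
            (if r - i ≤ ∑ j, (l j : ℕ) then x ^ (∑ j, (l j : ℕ)) else 0) := by
        intro l
        simp only [Fin.consEquiv_apply, Fin.sum_univ_succ, Fin.cons_zero, Fin.cons_succ, pow_add,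
          mul_ite, mul_zero, tsub_le_iff_left]
      simp only [hstep, ← Finset.mul_sum]
      refine (mul_le_mul_of_nonneg_left (ih (r - i)) (pow_nonneg hx0 _)).trans ?_
      rcases lt_or_ge (i : ℕ) r with hi | hi
      · have e : x ^ r = x ^ (i : ℕ) * x ^ (r - i) := by rw [← pow_add, Nat.add_sub_cancel' hi.le]
        have hle : ((r - (i : ℕ) : ℕ) : ℝ) ≤ r := by exact_mod_cast Nat.sub_le _ _
        rw [if_pos hi, if_neg (not_le.2 hi), add_zero, e]
        have : (((r - (i : ℕ) : ℕ) : ℝ) + 1) ^ (s - 1) ≤ ((r : ℝ) + 1) ^ (s - 1) := by gcongr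
        calc _ = G ^ s * (x ^ (i : ℕ) * x ^ (r - i)) * (((r - (i : ℕ) : ℕ) : ℝ) + 1) ^ (s - 1) := by
              ring
          _ ≤ G ^ s * (x ^ (i : ℕ) * x ^ (r - i)) * ((r : ℝ) + 1) ^ (s - 1) := by gcongr
          _ = _ := by ring
      · rw [if_neg (not_lt.2 hi), if_pos hi, Nat.sub_eq_zero_of_le hi]
        simp [mul_comm]
    refine (Finset.sum_le_sum fun i _ => hinner i).trans ?_
    rw [← Finset.mul_sum, Finset.sum_add_distrib]
    have h1 : ∑ i : Fin N, (if (i : ℕ) < r then x ^ r * ((r : ℝ) + 1) ^ (s - 1) else 0)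
        ≤ r * (x ^ r * ((r : ℝ) + 1) ^ (s - 1)) := by
      rw [Fin.sum_univ_eq_sum_range (fun i => if i < r then x ^ r * ((r : ℝ) + 1) ^ (s - 1) else 0),
        ← Finset.sum_filter, Finset.sum_const, nsmul_eq_mul]
      gcongr
      refine (Finset.card_le_card (t := Finset.range r) fun i hi => ?_).trans
        (Finset.card_range r).le
      exact Finset.mem_range.2 (Finset.mem_filter.1 hi).2
    have h2 : ∑ i : Fin N, (if r ≤ (i : ℕ) then x ^ (i : ℕ) else 0) ≤ x ^ r * G := by
      rw [Fin.sum_univ_eq_sum_range (fun i => if r ≤ i then x ^ i else 0)]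
      exact geom_tail_le hx0 hx1 N r
    have hP : (1 : ℝ) ≤ ((r : ℝ) + 1) ^ (s - 1) :=
      one_le_pow₀ (by linarith [Nat.cast_nonneg (α := ℝ) r])
    have hG0 : 0 ≤ G := by linarith
    have hxr : 0 ≤ x ^ r := pow_nonneg hx0 r
    have hpow : ((r : ℝ) + 1) ^ (s + 1 - 1) = ((r : ℝ) + 1) ^ (s - 1) * ((r : ℝ) + 1) := by
      rw [← pow_succ]
      congr 1
      omega
    rw [hpow]
    set Q := ((r : ℝ) + 1) ^ (s - 1)
    calc _ ≤ G ^ s * (r * (x ^ r * Q) + x ^ r * G) := by gcongr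
      _ ≤ G ^ s * (G * (r * (x ^ r * Q)) + x ^ r * G * Q) := by
        have ha : r * (x ^ r * Q) ≤ G * (r * (x ^ r * Q)) := le_mul_of_one_le_left (by positivity) hG
        have hc : x ^ r * G ≤ x ^ r * G * Q := le_mul_of_one_le_right (by positivity) hP
        gcongr
      _ = _ := by ring

/-! ### The dual sum for the NRT metric -/

/-- The dual net sum for the NRT metric, with an arbitrary exponent `d > 1`: grouping by the
vector of coordinate metrics, the group of `l` has at most `b ^ (∑ l j - μ_1(P) + 1)` members. -/
lemma nrt_sum_bound {b s n m : ℕ} (hb : b.Prime) (hs : 0 < s)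
    (C : Fin s → Matrix (Fin n) (Fin m) (ZMod b)) (d : ℝ) (hd : 1 < d)
    (D : Finset (Fin s → ℕ)) (hD : ∀ k ∈ D, k ∈ dualNet b C ∧ k ≠ 0) :
    ∑ k ∈ D, (b : ℝ) ^ (-(d * (dickVec b 1 k : ℝ))) ≤
      (b : ℝ) * ((1 - (b : ℝ) ^ (-(d - 1)))⁻¹) ^ s * ((minDick b 1 C : ℝ) + 1) ^ (s - 1) *
        (b : ℝ) ^ (-(d * (minDick b 1 C : ℝ))) := by
  have hb1 : (1 : ℝ) < b := by exact_mod_cast hb.one_lt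
  have hb0 : (0 : ℝ) < b := by linarith
  set x : ℝ := (b : ℝ) ^ (-(d - 1)) with hx
  have hx0 : 0 ≤ x := (Real.rpow_pos_of_pos hb0 _).le
  have hx1 : x < 1 := Real.rpow_lt_one_of_one_lt_of_neg hb1 (by linarith)
  rcases D.eq_empty_or_nonempty with rfl | ⟨k₀, hk₀⟩
  · have : 0 < (1 - x)⁻¹ := inv_pos.2 (by linarith)
    simp only [Finset.sum_empty]
    positivity
  have hxpow : ∀ L : ℕ, x ^ L = (b : ℝ) ^ (-(d - 1) * (L : ℝ)) := fun L => by
    rw [hx, ← Real.rpow_natCast, ← Real.rpow_mul hb0.le]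
  -- The minimum is attained at a nonzero vector, hence is positive.
  have hpos : minDick b 1 C ≠ 0 := by
    intro h
    obtain ⟨k, ⟨-, hk0⟩, hkd⟩ := Nat.sInf_mem
      (s := dickVec b 1 '' {k | k ∈ dualNet b C ∧ k ≠ 0}) ⟨_, k₀, hD k₀ hk₀, rfl⟩
    apply hk0
    have h0 : dickVec b 1 k = 0 := hkd.trans h
    funext j
    have hj := (Finset.sum_eq_zero_iff.1 h0) j (Finset.mem_univ j)
    simpa using (dick_one_le_iff hb (k j) 0).1 hj.le
  obtain ⟨r, hr⟩ := Nat.exists_eq_succ_of_ne_zero hpos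
  rw [Nat.succ_eq_add_one] at hr
  let φ : (Fin s → ℕ) → (Fin s → Fin (n + 1)) := fun k j => Fin.ofNat (n + 1) (dick b 1 (k j))
  have hφ : ∀ k ∈ D, ∀ j, ((φ k j : Fin (n + 1)) : ℕ) = dick b 1 (k j) := by
    intro k hk j
    have := (dick_one_le_iff hb (k j) n).2 ((hD k hk).1.1 j)
    simp only [φ, Fin.val_ofNat]
    exact Nat.mod_eq_of_lt (by omega)
  have hφsum : ∀ k ∈ D, dickVec b 1 k = ∑ j, (φ k j : ℕ) := fun k hk =>
    Finset.sum_congr rfl fun j _ => (hφ k hk j).symm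
  rw [← Finset.sum_fiberwise_of_maps_to (s := D) (t := Finset.univ) (g := φ)
    (fun k _ => Finset.mem_univ _)]
  have hfib : ∀ l : Fin s → Fin (n + 1),
      ∑ k ∈ D with φ k = l, (b : ℝ) ^ (-(d * (dickVec b 1 k : ℝ))) ≤
      (b : ℝ) ^ (-(r : ℝ)) *
        (if r + 1 ≤ ∑ j, (l j : ℕ) then x ^ (∑ j, (l j : ℕ)) else 0) := by
    intro l
    set L := ∑ j, (l j : ℕ) with hL
    have hval : ∀ k ∈ D.filter (fun k => φ k = l), dickVec b 1 k = L := by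
      intro k hk
      obtain ⟨hkD, rfl⟩ := Finset.mem_filter.1 hk
      exact hφsum k hkD
    split_ifs with hLr
    · have hc : (D.filter (fun k => φ k = l)).card ≤ b ^ (L - r) := by
        refine card_dual_box hb C (fun j => (l j : ℕ)) r hr (by omega) _ (fun k hk => ?_)
          (fun k hk j => ?_)
        · exact (hD k (Finset.mem_filter.1 hk).1).1
        · obtain ⟨hkD, rfl⟩ := Finset.mem_filter.1 hk
          exact (hφ k hkD j).ge
      have hc' : ((D.filter (fun k => φ k = l)).card : ℝ) ≤ (b : ℝ) ^ ((L : ℝ) - r) := by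
        rw [← Nat.cast_sub (by omega), Real.rpow_natCast]
        exact_mod_cast hc
      rw [Finset.sum_congr rfl (fun k hk => by rw [hval k hk]), Finset.sum_const, nsmul_eq_mul,
        hxpow]
      refine (mul_le_mul_of_nonneg_right hc' (Real.rpow_pos_of_pos hb0 _).le).trans (le_of_eq ?_)
      rw [← Real.rpow_add hb0, ← Real.rpow_add hb0]
      congr 1
      ring
    · rw [mul_zero, Finset.sum_eq_zero]
      intro k hk
      have h1 := hval k hk
      have hkD := hD k (Finset.mem_filter.1 hk).1
      have h2 := minDick_le (γ := 1) C hkD.1 hkD.2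
      omega
  refine (Finset.sum_le_sum fun l _ => hfib l).trans ?_
  rw [← Finset.mul_sum]
  refine (mul_le_mul_of_nonneg_left (multi_geom_tail hx0 hx1 (n + 1) s hs (r + 1))
    (Real.rpow_pos_of_pos hb0 _).le).trans (le_of_eq ?_)
  rw [hr, hxpow]
  have e : (b : ℝ) ^ (-(r : ℝ)) * (b : ℝ) ^ (-(d - 1) * ((r + 1 : ℕ) : ℝ))
      = b * (b : ℝ) ^ (-(d * ((r + 1 : ℕ) : ℝ))) := by
    nth_rewrite 3 [← Real.rpow_one (b : ℝ)]
    rw [← Real.rpow_add hb0, ← Real.rpow_add hb0]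
    congr 1
    push_cast
    ring
  linear_combination ((1 - x)⁻¹ ^ s * (((r + 1 : ℕ) : ℝ) + 1) ^ (s - 1)) * e

/-- For a prime `b` and `2 ≤ α`, `β ≥ 2α`, with `A = (α-1)/(β-1)` and
`B = (β-α)/(β-1)`, every digital net `P` over `F_b` satisfies
`∑_{k ∈ P⊥\{0}} b^{-2μ_α(k)} ≤ b (1 - b^{-(2B-1)})^{-s} (μ_1(P)+1)^{s-1} b^{-2A μ_β(P) - 2B μ_1(P)}`. -/
theorem dual_sum_bound (b s n m α β : ℕ) (hb : b.Prime) (hs : 0 < s)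
    (hα : 2 ≤ α) (hβ : 2 * α ≤ β)
    (C : Fin s → Matrix (Fin n) (Fin m) (ZMod b)) :
    (∑' k : {k : Fin s → ℕ // k ∈ dualNet b C ∧ k ≠ 0},
        (b : ℝ) ^ (-(2 * (dickVec b α k.1 : ℝ)))) ≤
      (b : ℝ) * ((1 - (b : ℝ) ^ (-(2 * (((β : ℝ) - α) / ((β : ℝ) - 1)) - 1)))⁻¹) ^ s *
        ((minDick b 1 C : ℝ) + 1) ^ (s - 1) *
        (b : ℝ) ^ (-(2 * (((α : ℝ) - 1) / ((β : ℝ) - 1)) * (minDick b β C : ℝ))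
          - 2 * (((β : ℝ) - α) / ((β : ℝ) - 1)) * (minDick b 1 C : ℝ)) := by
  have hb1 : (1 : ℝ) < b := by exact_mod_cast hb.one_lt
  have hb0 : (0 : ℝ) < b := by linarith
  have hα' : (2 : ℝ) ≤ α := by exact_mod_cast hα
  have hβ' : 2 * (α : ℝ) ≤ β := by exact_mod_cast hβ
  have hβ1 : 0 < (β : ℝ) - 1 := by linarith
  set A : ℝ := ((α : ℝ) - 1) / ((β : ℝ) - 1) with hA
  set B : ℝ := ((β : ℝ) - α) / ((β : ℝ) - 1) with hB
  have hA0 : 0 ≤ A := div_nonneg (by linarith) hβ1.le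
  have hd : 1 < 2 * B := by
    rw [hB, ← mul_div_assoc, lt_div_iff₀ hβ1]
    linarith
  have hinterp : ∀ k : Fin s → ℕ,
      A * (dickVec b β k : ℝ) + B * (dickVec b 1 k : ℝ) ≤ (dickVec b α k : ℝ) := by
    intro k
    simp only [dickVec, Nat.cast_sum, Finset.mul_sum]
    rw [← Finset.sum_add_distrib]
    refine Finset.sum_le_sum fun j _ => ?_
    have h := dick_interp b (k j) α β (by omega) (by omega)
    have h' : ((α : ℝ) - 1) * (dick b β (k j) : ℝ) + ((β : ℝ) - α) * (dick b 1 (k j) : ℝ)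
        ≤ ((β : ℝ) - 1) * (dick b α (k j) : ℝ) := by
      have e1 : ((α - 1 : ℕ) : ℝ) = (α : ℝ) - 1 := by
        rw [Nat.cast_sub (by omega)]
        simp
      have e2 : ((β - 1 : ℕ) : ℝ) = (β : ℝ) - 1 := by
        rw [Nat.cast_sub (by omega)]
        simp
      have e3 : ((β - α : ℕ) : ℝ) = (β : ℝ) - α := Nat.cast_sub (by omega)
      rw [← e1, ← e2, ← e3]
      exact_mod_cast h
    rw [hA, hB, div_mul_eq_mul_div, div_mul_eq_mul_div, ← add_div, div_le_iff₀ hβ1]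
    linarith
  have hfin : {k : Fin s → ℕ | k ∈ dualNet b C ∧ k ≠ 0}.Finite :=
    (Fintype.piFinset fun _ : Fin s => Finset.range (b ^ n)).finite_toSet.subset fun k hk => by
      simpa using hk.1.1
  have hD : ∀ k ∈ hfin.toFinset, k ∈ dualNet b C ∧ k ≠ 0 := fun k hk => by simpa using hk
  have hsum : (∑' k : {k : Fin s → ℕ // k ∈ dualNet b C ∧ k ≠ 0},
      (b : ℝ) ^ (-(2 * (dickVec b α k.1 : ℝ))))
      = ∑ k ∈ hfin.toFinset, (b : ℝ) ^ (-(2 * (dickVec b α k : ℝ))) := by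
    rw [← Finset.tsum_subtype' hfin.toFinset
      (fun k : Fin s → ℕ => (b : ℝ) ^ (-(2 * (dickVec b α k : ℝ)))), hfin.coe_toFinset]
    rfl
  rw [hsum]
  have hterm : ∀ k ∈ hfin.toFinset, (b : ℝ) ^ (-(2 * (dickVec b α k : ℝ))) ≤
      (b : ℝ) ^ (-(2 * A * (minDick b β C : ℝ))) *
        (b : ℝ) ^ (-(2 * B * (dickVec b 1 k : ℝ))) := by
    intro k hk
    rw [← Real.rpow_add hb0]
    refine Real.rpow_le_rpow_of_exponent_le hb1.le ?_
    have h1 : (minDick b β C : ℝ) ≤ dickVec b β k := by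
      exact_mod_cast minDick_le C (hD k hk).1 (hD k hk).2
    have h2 := hinterp k
    have h3 := mul_le_mul_of_nonneg_left h1 hA0
    linarith
  refine (Finset.sum_le_sum hterm).trans ?_
  rw [← Finset.mul_sum]
  refine (mul_le_mul_of_nonneg_left (nrt_sum_bound hb hs C (2 * B) hd _ hD)
    (Real.rpow_pos_of_pos hb0 _).le).trans (le_of_eq ?_)
  rw [sub_eq_add_neg (-(2 * A * (minDick b β C : ℝ))), Real.rpow_add hb0]
  ring
end
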